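/- Let $\lambda^{(1)},\dots,\lambda^{(k)}$ be rank-one real $d\times d$ matrices, and define self-adjoint operators $T_i = \sum_{j=1}^d X_j \otimes S_{i,j}$ on $H \otimes \mathbb{C}^k$, where $X_1,\dots,X_d$ are self-adjoint operators on $H$ and $S_{i,j} = \mathrm{diag}(\lambda^{(1)}_{i,j},\dots,\lambda^{(k)}_{i,j})$. Then $T_iT_n = T_nT_i$ for all $1 \leq i,n \leq d$. -/

import Mathlib

/-!
All `2 × 2` minors of a matrix of rank at most one vanish, so `λ i j * λ n m = λ n j * λ i m`.
In each block, `T i * T n = ∑ j, ∑ m, (λ i j * λ n m) • (X j * X m)`, and exchanging `i` and `n`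
leaves every coefficient unchanged by this identity; the `X j` themselves need not commute.
-/

section

variable {m n R : Type*} [Fintype n]

lemma det_submatrix_eq_zero_of_rank_lt [CommRing R] [IsDomain R] {ι : Type*} [Fintype ι]
    [DecidableEq ι] {A : Matrix m n R} (hA : A.rank < Fintype.card ι) (r : ι → m) (c : ι → n) :
    (A.submatrix r c).det = 0 := by
  by_contra hdet
  exact (A.rank_submatrix_le r c).not_gt (Matrix.rank_of_det_ne_zero hdet ▸ hA)

lemma mul_eq_mul_of_rank_le_one [CommRing R] [IsDomain R] {A : Matrix m n R} (hA : A.rank ≤ 1)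
    (i i' : m) (j j' : n) : A i j * A i' j' = A i' j * A i j' := by
  have hlt : A.rank < Fintype.card (Fin 2) := hA.trans_lt (by simp)
  have hminor : A i j * A i' j' - A i j' * A i' j = 0 :=
    (Matrix.det_fin_two _).symm.trans (det_submatrix_eq_zero_of_rank_lt hlt ![i, i'] ![j, j'])
  rw [sub_eq_zero.mp hminor, mul_comm]

lemma commute_sum_smul_of_mul_eq_mul [Semiring R] {S : Type*} [NonUnitalNonAssocSemiring S]
    [Module R S] [IsScalarTower R S S] [SMulCommClass R S S] {a b : n → R}
    (hab : ∀ j j', a j * b j' = b j * a j') (x : n → S) :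
    Commute (∑ j, a j • x j) (∑ j, b j • x j) := by
  calc (∑ j, a j • x j) * ∑ j, b j • x j
    _ = ∑ j, ∑ j', (a j * b j') • (x j * x j') := by
      simp only [Finset.sum_mul_sum, smul_mul_smul_comm]
    _ = ∑ j, ∑ j', (b j * a j') • (x j * x j') := by simp only [hab]
    _ = (∑ j, b j • x j) * ∑ j, a j • x j := by
      simp only [Finset.sum_mul_sum, smul_mul_smul_comm]

theorem stmt_8_general [CommRing R] [IsDomain R] {κ V : Type*} [AddCommMonoid V] [Module R V]
    (lam : κ → Matrix m n R) (hrank : ∀ p, (lam p).rank ≤ 1) (X : n → Module.End R V)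
    (T : m → (κ → V) → (κ → V)) (hT : ∀ i h p, T i h p = ∑ j, lam p i j • X j (h p)) (i i' : m) :
    T i ∘ T i' = T i' ∘ T i := by
  have T_apply (i h p) : T i h p = (∑ j, lam p i j • X j) (h p) := by
    simp only [hT, LinearMap.sum_apply, LinearMap.smul_apply]
  funext h p
  have hcomm : Commute (∑ j, lam p i j • X j) (∑ j, lam p i' j • X j) :=
    commute_sum_smul_of_mul_eq_mul (mul_eq_mul_of_rank_le_one (hrank p) i i') X
  simpa only [Function.comp_apply, T_apply, Module.End.mul_apply] using
    LinearMap.congr_fun hcomm.eq (h p)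

end

/-- If each `λ⁽ᵖ⁾` is a rank-one real `d × d` matrix and
`Tᵢ = ∑ⱼ Xⱼ ⊗ S_{i,j}` on `H ⊗ ℂᵏ ≅ ⊕ₚ H`, where
`S_{i,j} = diag(λ⁽¹⁾_{i,j},…,λ⁽ᵏ⁾_{i,j})` (so the `p`-th component of `Tᵢ h` is
`∑ⱼ λ⁽ᵖ⁾_{i,j} Xⱼ (h p)`), then the `Tᵢ` pairwise commute. -/
theorem stmt_8 (d k : ℕ) {H : Type} [NormedAddCommGroup H] [InnerProductSpace ℂ H] [CompleteSpace H]
    (lam : Fin k → Matrix (Fin d) (Fin d) ℝ)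
    (hrank : ∀ p, (lam p).rank = 1)
    (X : Fin d → H →L[ℂ] H) (hX : ∀ j, IsSelfAdjoint (X j))
    (T : Fin d → (Fin k → H) → (Fin k → H))
    (hT : ∀ i h p, T i h p = ∑ j, (lam p i j : ℂ) • X j (h p)) :
    ∀ i n, T i ∘ T n = T n ∘ T i :=
  stmt_8_general lam (fun p => (hrank p).le) (fun j => (X j).toLinearMap.restrictScalars ℝ) T hT
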